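/- Let n ≥ 1 be an integer, 0 < α < n and γ ≥ 0. Suppose 1 ≤ p₁ ≤ q₁ < n/α, 1 ≤ s < t = n/(n−α), 1/p₂ = 1/p₁ − 1/s', and 1/q₂ = 1/q₁ − 1/t', where s' and t' are the conjugate exponents of s and t. Then there exists a constant C > 0 such that for every f ∈ L^{p₁,q₁}(ℝⁿ), ||I_{α,γ}f||_{L^{p₂,q₂}} ≤ C ||K_{α,γ}||_{L^{s,t}} ||f||_{L^{p₁,q₁}}; in particular I_{α,γ} is bounded from L^{p₁,q₁}(ℝⁿ) to L^{p₂,q₂}(ℝⁿ). -/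

import Mathlib

open MeasureTheory Metric
open scoped ENNReal NNReal

/-- The Riesz kernel `K_α(x) = |x|^{α-n}`. -/
noncomputable def rieszKernel (n : ℕ) (α : ℝ) (x : EuclideanSpace ℝ (Fin n)) : ℝ :=
  ‖x‖ ^ (α - (n : ℝ))

/-- The Bessel-Riesz kernel `K_{α,γ}(x) = |x|^{α-n} / (1+|x|)^γ`. -/
noncomputable def besselRieszKernel (n : ℕ) (α γ : ℝ) (x : EuclideanSpace ℝ (Fin n)) : ℝ :=
  ‖x‖ ^ (α - (n : ℝ)) / (1 + ‖x‖) ^ γ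

/-- The Bessel-Riesz operator `I_{α,γ} f (x) = ∫ K_{α,γ}(x-y) f(y) dy`. -/
noncomputable def besselRiesz (n : ℕ) (α γ : ℝ)
    (f : EuclideanSpace ℝ (Fin n) → ℝ) (x : EuclideanSpace ℝ (Fin n)) : ℝ :=
  ∫ y, besselRieszKernel n α γ (x - y) * f y

/-- The Morrey norm `‖f‖_{L^{p,q}} = sup_B |B|^{1/q-1/p} (∫_B |f|^p)^{1/p}`. -/
noncomputable def morreyNorm (n : ℕ) (p q : ℝ)
    (f : EuclideanSpace ℝ (Fin n) → ℝ) : ℝ≥0∞ :=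
  ⨆ (a : EuclideanSpace ℝ (Fin n)) (R : ℝ) (_ : 0 < R),
    volume (ball a R) ^ (1 / q - 1 / p) *
      (∫⁻ x in ball a R, ENNReal.ofReal (|f x| ^ p)) ^ (1 / p)

/-- The generalized Morrey norm
`‖f‖_{L^{p,φ}} = sup_B (1/φ(R)) ((1/|B|) ∫_B |f|^p)^{1/p}`. -/
noncomputable def gMorreyNorm (n : ℕ) (p : ℝ) (φ : ℝ → ℝ)
    (f : EuclideanSpace ℝ (Fin n) → ℝ) : ℝ≥0∞ :=
  ⨆ (a : EuclideanSpace ℝ (Fin n)) (R : ℝ) (_ : 0 < R),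
    (ENNReal.ofReal (φ R))⁻¹ *
      ((volume (ball a R))⁻¹ * ∫⁻ x in ball a R, ENNReal.ofReal (|f x| ^ p)) ^ (1 / p)

/-- `φ : (0,∞) → (0,∞)` is of class `G_p`: positive on `(0,∞)`, almost decreasing, and
`r ↦ φ(r)^p r^n` is almost increasing. -/
def IsClassG (n : ℕ) (p : ℝ) (φ : ℝ → ℝ) : Prop :=
  (∀ r : ℝ, 0 < r → 0 < φ r) ∧
  (∃ C : ℝ, 0 < C ∧ ∀ r s : ℝ, 0 < r → r ≤ s → C * φ s ≤ φ r) ∧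
  (∃ C : ℝ, 0 < C ∧ ∀ r s : ℝ, 0 < r → r ≤ s →
    φ r ^ p * r ^ (n : ℝ) ≤ C * (φ s ^ p * s ^ (n : ℝ)))

/-- `ρ` is almost increasing on `(0,∞)`. -/
def IsAlmostIncreasing (ρ : ℝ → ℝ) : Prop :=
  ∃ C : ℝ, 0 < C ∧ ∀ r s : ℝ, 0 < r → r ≤ s → ρ r ≤ C * ρ s

/-- Operator norm of `I_{α,γ}` from `L^{p₁,φ}` to `L^{p₂,ψ}`. -/
noncomputable def besselRieszOpNormGM (n : ℕ) (α γ p₁ p₂ : ℝ) (φ ψ : ℝ → ℝ) : ℝ≥0∞ :=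
  ⨆ f : {f : EuclideanSpace ℝ (Fin n) → ℝ //
      Measurable f ∧ gMorreyNorm n p₁ φ f ≠ 0 ∧ gMorreyNorm n p₁ φ f ≠ ⊤},
    gMorreyNorm n p₂ ψ (besselRiesz n α γ f.1) / gMorreyNorm n p₁ φ f.1

/-!
Split the kernel at the radius `R` of the ball on which the convolution is measured. The near part
only sees `f` on the doubled ball, so Young's inequality applies. A radially decreasing kernel is at
most its mean over a smaller ball, so `K z ≤ ‖K‖_{s,t} |B(0,r)| ^ (-1/t)` whenever `r ≤ ‖z‖`;
on the dyadic annuli outside `B(0,R)` this bounds the far part by a geometric series with ratio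
`2 ^ (-n/q₂)`, uniformly in the centre.
-/

open Module

section Young

variable {G : Type*} [AddGroup G] [MeasurableSpace G] [MeasurableAdd₂ G] [MeasurableNeg G]
  {μ : Measure G} {f g : G → ℝ≥0∞}

lemma lintegral_lconvolution [SFinite μ] [μ.IsAddLeftInvariant] (hf : AEMeasurable f μ)
    (hg : AEMeasurable g μ) :
    ∫⁻ x, (f ⋆ₗ[μ] g) x ∂μ = (∫⁻ x, f x ∂μ) * ∫⁻ x, g x ∂μ := by
  simp only [lconvolution_def]
  rw [lintegral_lintegral_swap (by fun_prop), ← lintegral_mul_const'' _ hf]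
  refine lintegral_congr fun y => ?_
  have hgy : AEMeasurable (fun x => g (-y + x)) μ :=
    hg.comp_quasiMeasurePreserving (measurePreserving_add_left μ (-y)).quasiMeasurePreserving
  rw [lintegral_const_mul'' _ hgy, lintegral_add_left_eq_self]

variable [μ.IsAddRightInvariant] [μ.IsNegInvariant] {p q r : ℝ}

lemma measurePreserving_neg_add (x : G) : MeasurePreserving (fun y => -y + x) μ μ :=
  (measurePreserving_add_right μ x).comp (Measure.measurePreserving_neg μ)

lemma lintegral_neg_add_eq_self (g : G → ℝ≥0∞) (x : G) :
    ∫⁻ y, g (-y + x) ∂μ = ∫⁻ y, g y ∂μ := by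
  rw [lintegral_neg_eq_self fun y => g (y + x), lintegral_add_right_eq_self]

lemma lconvolution_add {h : G → ℝ≥0∞} (hf : AEMeasurable f μ) (hg : AEMeasurable g μ) (x : G) :
    (f ⋆ₗ[μ] (g + h)) x = (f ⋆ₗ[μ] g) x + (f ⋆ₗ[μ] h) x := by
  have hgx : AEMeasurable (fun y => g (-y + x)) μ :=
    hg.comp_quasiMeasurePreserving (measurePreserving_neg_add x).quasiMeasurePreserving
  simp only [lconvolution_def, Pi.add_apply, mul_add]
  exact lintegral_add_left' (hf.mul hgx) _

lemma lconvolution_le_mul_lconvolution_rpow (hf : AEMeasurable f μ) (hg : AEMeasurable g μ)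
    (hp : 1 ≤ p) (hq : 1 ≤ q) (hr : 0 < r) (hpqr : 1 / r = 1 / p - (1 - 1 / q)) (x : G) :
    (f ⋆ₗ[μ] g) x ≤ ((fun y => f y ^ p) ⋆ₗ[μ] fun y => g y ^ q) x ^ (1 / r) *
      ((∫⁻ y, f y ^ p ∂μ) ^ (1 / p - 1 / r) * (∫⁻ y, g y ^ q ∂μ) ^ (1 / q - 1 / r)) := by
  have hgx : AEMeasurable (fun y => g (-y + x)) μ :=
    hg.comp_quasiMeasurePreserving (measurePreserving_neg_add x).quasiMeasurePreserving
  have hr' : 0 ≤ 1 / r := by positivity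
  have hpr : 0 ≤ 1 / p - 1 / r := by
    linarith [(div_le_one (zero_lt_one.trans_le hq)).2 hq]
  have hqr : 0 ≤ 1 / q - 1 / r := by
    linarith [(div_le_one (zero_lt_one.trans_le hp)).2 hp]
  have split_rpow (c : ℝ≥0∞) {u : ℝ} (hu : 1 ≤ u) (hur : 0 ≤ 1 / u - 1 / r) :
      c = (c ^ u) ^ (1 / r) * (c ^ u) ^ (1 / u - 1 / r) := by
    rw [← ENNReal.rpow_add_of_nonneg _ _ hr' hur, add_sub_cancel, one_div,
      ENNReal.rpow_rpow_inv (by positivity)]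
  have holder := ENNReal.lintegral_mul_prod_norm_pow_le (μ := μ) Finset.univ
    (g := fun y => f y ^ p * g (-y + x) ^ q) (f := ![fun y => f y ^ p, fun y => g (-y + x) ^ q])
    (q := 1 / r) (p := ![1 / p - 1 / r, 1 / q - 1 / r])
    ((hf.pow_const p).mul (hgx.pow_const q))
    (by simpa only [Finset.mem_univ, true_imp_iff, Fin.forall_fin_two] using
      ⟨hf.pow_const p, hgx.pow_const q⟩)
    (by simp only [Fin.sum_univ_two, Matrix.cons_val_zero, Matrix.cons_val_one]; linarith) hr'
    (by simpa only [Finset.mem_univ, true_imp_iff, Fin.forall_fin_two] using ⟨hpr, hqr⟩)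
  simp only [Fin.prod_univ_two, Matrix.cons_val_zero, Matrix.cons_val_one] at holder
  rw [lintegral_neg_add_eq_self (fun y => g y ^ q) x] at holder
  refine le_of_eq_of_le (lintegral_congr fun y => ?_) holder
  rw [ENNReal.mul_rpow_of_nonneg _ _ hr', mul_mul_mul_comm, ← split_rpow _ hp hpr,
    ← split_rpow _ hq hqr]

theorem rpow_lintegral_lconvolution_le [SFinite μ] [μ.IsAddLeftInvariant] (hf : AEMeasurable f μ)
    (hg : AEMeasurable g μ) (hp : 1 ≤ p) (hq : 1 ≤ q) (hr : 0 < r)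
    (hpqr : 1 / r = 1 / p - (1 - 1 / q)) :
    (∫⁻ x, (f ⋆ₗ[μ] g) x ^ r ∂μ) ^ (1 / r) ≤
      (∫⁻ x, f x ^ p ∂μ) ^ (1 / p) * (∫⁻ x, g x ^ q ∂μ) ^ (1 / q) := by
  set A := ∫⁻ x, f x ^ p ∂μ
  set B := ∫⁻ x, g x ^ q ∂μ
  have hr' : 0 ≤ 1 / r := by positivity
  have hpr : 0 ≤ 1 / p - 1 / r := by
    linarith [(div_le_one (zero_lt_one.trans_le hq)).2 hq]
  have hqr : 0 ≤ 1 / q - 1 / r := by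
    linarith [(div_le_one (zero_lt_one.trans_le hp)).2 hp]
  calc (∫⁻ x, (f ⋆ₗ[μ] g) x ^ r ∂μ) ^ (1 / r)
      ≤ (∫⁻ x, ((fun y => f y ^ p) ⋆ₗ[μ] fun y => g y ^ q) x *
          (A ^ (1 / p - 1 / r) * B ^ (1 / q - 1 / r)) ^ r ∂μ) ^ (1 / r) := by
        gcongr with x
        grw [lconvolution_le_mul_lconvolution_rpow hf hg hp hq hr hpqr x]
        rw [ENNReal.mul_rpow_of_nonneg _ _ hr.le, one_div r, ENNReal.rpow_inv_rpow hr.ne']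
    _ = (A * B) ^ (1 / r) * (A ^ (1 / p - 1 / r) * B ^ (1 / q - 1 / r)) := by
        rw [lintegral_mul_const'' _ (by fun_prop),
          lintegral_lconvolution (hf.pow_const p) (hg.pow_const q),
          ENNReal.mul_rpow_of_nonneg _ _ hr', one_div r, ENNReal.rpow_rpow_inv hr.ne']
    _ = A ^ (1 / p) * B ^ (1 / q) := by
        rw [ENNReal.mul_rpow_of_nonneg _ _ hr', mul_mul_mul_comm,
          ← ENNReal.rpow_add_of_nonneg _ _ hr' hpr, ← ENNReal.rpow_add_of_nonneg _ _ hr' hqr,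
          add_sub_cancel, add_sub_cancel]

end Young

/-- The Morrey norm `sup_B μ(B)^{1/q-1/p} (∫_B f^p)^{1/p}` of an extended nonnegative function on a
metric measure space, the form in which kernels, functions and their convolutions are estimated. -/
noncomputable def eMorreyNorm {X : Type*} [PseudoMetricSpace X] [MeasurableSpace X] (μ : Measure X)
    (p q : ℝ) (f : X → ℝ≥0∞) : ℝ≥0∞ :=
  ⨆ (a : X) (R : ℝ) (_ : 0 < R),
    μ (ball a R) ^ (1 / q - 1 / p) * (∫⁻ x in ball a R, f x ^ p ∂μ) ^ (1 / p)

namespace eMorreyNorm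

variable {X : Type*} [PseudoMetricSpace X] [MeasurableSpace X] {μ : Measure X} {p q : ℝ}
  {f g : X → ℝ≥0∞}

lemma mono (hp : 0 ≤ p) (hfg : ∀ x, f x ≤ g x) : eMorreyNorm μ p q f ≤ eMorreyNorm μ p q g := by
  unfold eMorreyNorm
  gcongr
  exact hfg _

variable [ProperSpace X] [μ.IsOpenPosMeasure] [IsFiniteMeasureOnCompacts μ]

lemma rpow_lintegral_ball_le (a : X) {R : ℝ} (hR : 0 < R) :
    (∫⁻ x in ball a R, f x ^ p ∂μ) ^ (1 / p) ≤
      eMorreyNorm μ p q f * μ (ball a R) ^ (1 / p - 1 / q) := by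
  have hle : μ (ball a R) ^ (1 / q - 1 / p) * (∫⁻ x in ball a R, f x ^ p ∂μ) ^ (1 / p) ≤
      eMorreyNorm μ p q f :=
    le_iSup_of_le a (le_iSup_of_le R (le_iSup_of_le hR le_rfl))
  grw [← hle]
  rw [mul_right_comm, ← ENNReal.rpow_add _ _ (measure_ball_pos μ a hR).ne' measure_ball_lt_top.ne]
  simp

lemma lintegral_ball_le (hp : 1 ≤ p) (hf : AEMeasurable f μ) (a : X) {R : ℝ} (hR : 0 < R) :
    ∫⁻ x in ball a R, f x ∂μ ≤ eMorreyNorm μ p q f * μ (ball a R) ^ (1 - 1 / q) := by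
  have hp0 : 0 < p := zero_lt_one.trans_le hp
  have holder : ∫⁻ x in ball a R, f x ∂μ ≤
      (∫⁻ x in ball a R, f x ^ p ∂μ) ^ (1 / p) * μ (ball a R) ^ (1 - 1 / p) := by
    simpa [ENNReal.rpow_rpow_inv hp0.ne'] using
      ENNReal.lintegral_mul_norm_pow_le (μ := μ.restrict (ball a R)) (f := fun x => f x ^ p)
        (g := fun _ => 1) (hf.restrict.pow_const p) aemeasurable_const
        (p := 1 / p) (q := 1 - 1 / p) (by positivity) (sub_nonneg.2 ((div_le_one hp0).2 hp))
        (add_sub_cancel _ _)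
  grw [holder, rpow_lintegral_ball_le (q := q) a hR]
  rw [mul_assoc, ← ENNReal.rpow_add _ _ (measure_ball_pos μ a hR).ne' measure_ball_lt_top.ne,
    add_comm, sub_add_sub_cancel]

end eMorreyNorm

/-- A nonnegative kernel whose values do not increase with the norm. The origin is left out, because
singular kernels such as `‖x‖ ^ (α - n)` get the value `0` there. -/
def IsRadiallyDecreasing {E : Type*} [NormedAddCommGroup E] (K : E → ℝ≥0∞) : Prop :=
  ∀ ⦃w z : E⦄, w ≠ 0 → ‖w‖ ≤ ‖z‖ → K z ≤ K w

/-- The constant of the Young inequality in Morrey spaces, where doubling the radius of a ball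
multiplies its measure by `D`. The first summand comes from the part of the kernel in the ball, the
second from summing a geometric series over the dyadic annuli around it. -/
noncomputable def morreyYoungConst (D : ℝ≥0∞) (p₁ q₁ q₂ : ℝ) : ℝ≥0∞ :=
  D ^ (1 / p₁ - 1 / q₁) + D ^ (1 - 1 / q₁) * (1 - D ^ (-(1 / q₂)))⁻¹

namespace morreyYoungConst

variable {D : ℝ≥0∞} {p₁ q₁ q₂ : ℝ}

lemma ne_zero (hD : 1 < D) (hD_top : D ≠ ⊤) : morreyYoungConst D p₁ q₁ q₂ ≠ 0 :=
  (add_pos_of_pos_of_nonneg (ENNReal.rpow_pos (zero_lt_one.trans hD) hD_top) zero_le).ne'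

lemma ne_top (hD : 1 < D) (hD_top : D ≠ ⊤) (hq₂ : 0 < q₂) : morreyYoungConst D p₁ q₁ q₂ ≠ ⊤ := by
  have hD0 : D ≠ 0 := (zero_lt_one.trans hD).ne'
  have hlt : D ^ (-(1 / q₂)) < 1 :=
    ENNReal.rpow_lt_one_of_one_lt_of_neg hD (neg_lt_zero.2 (one_div_pos.2 hq₂))
  exact ENNReal.add_ne_top.2 ⟨ENNReal.rpow_ne_top_of_ne_zero hD0 hD_top,
    ENNReal.mul_ne_top (ENNReal.rpow_ne_top_of_ne_zero hD0 hD_top)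
      (ENNReal.inv_ne_top.2 (tsub_pos_of_lt hlt).ne')⟩

end morreyYoungConst

section Localization

lemma lintegral_indicator_rpow {X : Type*} [MeasurableSpace X] {μ : Measure X} {f : X → ℝ≥0∞}
    {p : ℝ} {S : Set X} (hS : MeasurableSet S) (hp : 0 < p) :
    ∫⁻ x, S.indicator f x ^ p ∂μ = ∫⁻ x in S, f x ^ p ∂μ := by
  rw [← lintegral_indicator hS]
  refine lintegral_congr fun x => ?_
  by_cases hx : x ∈ S <;> simp [hx, hp]

lemma rpow_setLIntegral_const_rpow {X : Type*} [MeasurableSpace X] {μ : Measure X} {p : ℝ}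
    (hp : 0 < p) (c : ℝ≥0∞) (S : Set X) :
    (∫⁻ _ in S, c ^ p ∂μ) ^ (1 / p) = c * μ S ^ (1 / p) := by
  rw [setLIntegral_const, ENNReal.mul_rpow_of_nonneg _ _ (by positivity), one_div,
    ENNReal.rpow_rpow_inv hp.ne']

variable {E : Type*} [NormedAddCommGroup E] {K : E → ℝ≥0∞}

lemma indicator_ball_zero_neg_add (R : ℝ) (x y : E) :
    (ball 0 R).indicator K (-y + x) = (ball x R).indicator (fun y => K (-y + x)) y := by
  have : -y + x ∈ ball 0 R ↔ y ∈ ball x R := by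
    rw [mem_ball_zero_iff, mem_ball, dist_comm, dist_eq_norm, neg_add_eq_sub]
  by_cases hy : y ∈ ball x R <;> simp [this, hy]

variable [MeasurableSpace E] {μ : Measure E} {f : E → ℝ≥0∞}

lemma lconvolution_indicator_ball_one [OpensMeasurableSpace E] (x : E) (R : ℝ) :
    (f ⋆ₗ[μ] (ball 0 R).indicator 1) x = ∫⁻ y in ball x R, f y ∂μ := by
  simp only [lconvolution_def, indicator_ball_zero_neg_add, Pi.one_apply]
  rw [← lintegral_indicator measurableSet_ball]
  refine lintegral_congr fun y => ?_
  by_cases hy : y ∈ ball x R <;> simp [hy]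

lemma lconvolution_indicator_ball_eq {a x : E} {R : ℝ} (hx : x ∈ ball a R) :
    (f ⋆ₗ[μ] (ball 0 R).indicator K) x =
      ((ball a (2 * R)).indicator f ⋆ₗ[μ] (ball 0 R).indicator K) x := by
  simp only [lconvolution_def, indicator_ball_zero_neg_add]
  refine lintegral_congr fun y => ?_
  by_cases hy : y ∈ ball x R
  · have : y ∈ ball a (2 * R) := by
      rw [mem_ball] at hx hy ⊢
      linarith [dist_triangle y x a]
    rw [Set.indicator_of_mem this]
  · simp only [Set.indicator_of_notMem hy, mul_zero]

end Localization

section Convolution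

lemma dyadic_rpow_mul_rpow_eq {D V : ℝ≥0∞} {q₁ q₂ t : ℝ} (hD0 : D ≠ 0) (hD : D ≠ ⊤)
    (hV0 : V ≠ 0) (hV : V ≠ ⊤) (hq₂ : 1 / q₂ = 1 / q₁ - (1 - 1 / t)) (k : ℕ) :
    (D ^ k * V) ^ (-(1 / t)) * (D ^ (k + 1) * V) ^ (1 - 1 / q₁) =
      D ^ (1 - 1 / q₁) * V ^ (-(1 / q₂)) * (D ^ (-(1 / q₂))) ^ k := by
  have hDk0 : D ^ k * V ≠ 0 := mul_ne_zero (pow_ne_zero k hD0) hV0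
  have hDk : D ^ k * V ≠ ⊤ := ENNReal.mul_ne_top (ENNReal.pow_ne_top hD) hV
  rw [pow_succ', mul_assoc, ENNReal.mul_rpow_of_ne_top hD hDk, mul_left_comm,
    ← ENNReal.rpow_add _ _ hDk0 hDk,
    show -(1 / t) + (1 - 1 / q₁) = -(1 / q₂) by rw [hq₂]; ring,
    ENNReal.mul_rpow_of_ne_top (ENNReal.pow_ne_top hD) hV, ← ENNReal.rpow_natCast_mul,
    mul_comm (k : ℝ), ENNReal.rpow_mul_natCast]
  ring

variable {E : Type*} [NormedAddCommGroup E] [NormedSpace ℝ E] [FiniteDimensional ℝ E]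
  [MeasurableSpace E] [BorelSpace E] {μ : Measure E} [μ.IsAddHaarMeasure]
  {f K : E → ℝ≥0∞} {p₁ q₁ s t p₂ q₂ : ℝ}

lemma measure_ball_two_pow_mul (a : E) (R : ℝ) (k : ℕ) :
    μ (ball a (2 ^ k * R)) = (2 ^ finrank ℝ E) ^ k * μ (ball a R) := by
  rw [μ.addHaar_ball_mul_of_pos a (by positivity), μ.addHaar_ball_center a,
    ENNReal.ofReal_pow (by positivity), ENNReal.ofReal_pow zero_le_two, ENNReal.ofReal_ofNat,
    pow_right_comm]

lemma rpow_lintegral_ball_lconvolution_indicator_ball_le (hf : AEMeasurable f μ)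
    (hK : AEMeasurable K μ) (hp₁ : 1 ≤ p₁) (hs : 1 ≤ s) (hp₂_pos : 0 < p₂)
    (hp₂ : 1 / p₂ = 1 / p₁ - (1 - 1 / s)) (a : E) (R : ℝ) :
    (∫⁻ x in ball a R, (f ⋆ₗ[μ] (ball 0 R).indicator K) x ^ p₂ ∂μ) ^ (1 / p₂) ≤
      (∫⁻ x in ball a (2 * R), f x ^ p₁ ∂μ) ^ (1 / p₁) *
        (∫⁻ x in ball 0 R, K x ^ s ∂μ) ^ (1 / s) := by
  set g := (ball a (2 * R)).indicator f ⋆ₗ[μ] (ball 0 R).indicator K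
  calc (∫⁻ x in ball a R, (f ⋆ₗ[μ] (ball 0 R).indicator K) x ^ p₂ ∂μ) ^ (1 / p₂)
      = (∫⁻ x in ball a R, g x ^ p₂ ∂μ) ^ (1 / p₂) := by
        congr 1
        exact setLIntegral_congr_fun measurableSet_ball fun x hx =>
          congrArg (· ^ p₂) (lconvolution_indicator_ball_eq hx)
    _ ≤ (∫⁻ x, g x ^ p₂ ∂μ) ^ (1 / p₂) :=
        ENNReal.rpow_le_rpow (setLIntegral_le_lintegral _ _) (by positivity)
    _ ≤ _ := by
        grw [rpow_lintegral_lconvolution_le (hf.indicator measurableSet_ball)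
          (hK.indicator measurableSet_ball) hp₁ hs hp₂_pos hp₂]
        rw [lintegral_indicator_rpow measurableSet_ball (zero_lt_one.trans_le hp₁),
          lintegral_indicator_rpow measurableSet_ball (zero_lt_one.trans_le hs)]

lemma rpow_lintegral_ball_lconvolution_indicator_ball_le_eMorreyNorm (hf : AEMeasurable f μ)
    (hK : AEMeasurable K μ) (hp₁ : 1 ≤ p₁) (hs : 1 ≤ s) (hp₂_pos : 0 < p₂)
    (hp₂ : 1 / p₂ = 1 / p₁ - (1 - 1 / s)) (hq₂ : 1 / q₂ = 1 / q₁ - (1 - 1 / t))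
    (a : E) {R : ℝ} (hR : 0 < R) :
    (∫⁻ x in ball a R, (f ⋆ₗ[μ] (ball 0 R).indicator K) x ^ p₂ ∂μ) ^ (1 / p₂) ≤
      (2 ^ finrank ℝ E) ^ (1 / p₁ - 1 / q₁) * eMorreyNorm μ s t K * eMorreyNorm μ p₁ q₁ f *
        μ (ball a R) ^ (1 / p₂ - 1 / q₂) := by
  have hball : μ (ball a (2 * R)) = 2 ^ finrank ℝ E * μ (ball a R) := by
    simpa using measure_ball_two_pow_mul (μ := μ) a R 1
  have hexp : 1 / p₂ - 1 / q₂ = (1 / p₁ - 1 / q₁) + (1 / s - 1 / t) := by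
    rw [hp₂, hq₂]
    ring
  grw [rpow_lintegral_ball_lconvolution_indicator_ball_le hf hK hp₁ hs hp₂_pos hp₂ a R,
    eMorreyNorm.rpow_lintegral_ball_le (q := q₁) a (R := 2 * R) (by positivity),
    eMorreyNorm.rpow_lintegral_ball_le (q := t) 0 hR]
  rw [← μ.addHaar_ball_center a R, hball,
    ENNReal.mul_rpow_of_ne_top (by simp) measure_ball_lt_top.ne, hexp,
    ENNReal.rpow_add _ _ (measure_ball_pos μ a hR).ne' measure_ball_lt_top.ne]
  exact le_of_eq (by ring)

variable [Nontrivial E]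

lemma IsRadiallyDecreasing.le_eMorreyNorm_mul (hK : IsRadiallyDecreasing K)
    (hKm : AEMeasurable K μ) (hs : 1 ≤ s) {R : ℝ} (hR : 0 < R) {z : E} (hz : R ≤ ‖z‖) :
    K z ≤ eMorreyNorm μ s t K * μ (ball 0 R) ^ (-(1 / t)) := by
  have hV0 : μ (ball 0 R) ≠ 0 := (measure_ball_pos μ 0 hR).ne'
  have hVt : μ (ball 0 R) ≠ ⊤ := measure_ball_lt_top.ne
  have mean : K z * μ (ball 0 R) ≤ eMorreyNorm μ s t K * μ (ball 0 R) ^ (1 - 1 / t) :=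
    calc K z * μ (ball 0 R) = ∫⁻ _ in ball 0 R, K z ∂μ := (setLIntegral_const _ _).symm
      _ ≤ ∫⁻ w in ball 0 R, K w ∂μ := by
        refine setLIntegral_mono_ae' measurableSet_ball ?_
        filter_upwards [Measure.ae_ne μ 0] with w hw hwR
        exact hK hw ((mem_ball_zero_iff.1 hwR).le.trans hz)
      _ ≤ _ := eMorreyNorm.lintegral_ball_le hs hKm 0 hR
  rwa [sub_eq_neg_add, ENNReal.rpow_add _ _ hV0 hVt, ENNReal.rpow_one, ← mul_assoc,
    ENNReal.mul_le_mul_iff_left hV0 hVt] at mean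

lemma IsRadiallyDecreasing.indicator_compl_ball_le_tsum (hK : IsRadiallyDecreasing K)
    (hKm : AEMeasurable K μ) (hs : 1 ≤ s) {R : ℝ} (hR : 0 < R) (z : E) :
    (ball 0 R)ᶜ.indicator K z ≤ ∑' k : ℕ, eMorreyNorm μ s t K *
      μ (ball 0 (2 ^ k * R)) ^ (-(1 / t)) * (ball 0 (2 ^ (k + 1) * R)).indicator 1 z := by
  by_cases hz : z ∈ ball 0 R
  · simp [hz]
  have hRz : R ≤ ‖z‖ := by simpa using hz
  obtain ⟨k, hk, hk'⟩ := exists_nat_pow_near ((one_le_div hR).2 hRz) (one_lt_two (α := ℝ))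
  rw [le_div_iff₀ hR] at hk
  rw [div_lt_iff₀ hR] at hk'
  refine le_trans ?_ (ENNReal.le_tsum k)
  rw [Set.indicator_of_mem (Set.mem_compl hz), Set.indicator_of_mem (mem_ball_zero_iff.2 hk'),
    Pi.one_apply, mul_one]
  exact hK.le_eMorreyNorm_mul hKm hs (by positivity) hk

lemma lconvolution_indicator_compl_ball_le (hf : AEMeasurable f μ)
    (hK : IsRadiallyDecreasing K) (hKm : AEMeasurable K μ) (hp₁ : 1 ≤ p₁) (hs : 1 ≤ s)
    (hq₂ : 1 / q₂ = 1 / q₁ - (1 - 1 / t)) (x : E) {R : ℝ} (hR : 0 < R) :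
    (f ⋆ₗ[μ] (ball 0 R)ᶜ.indicator K) x ≤
      (2 ^ finrank ℝ E) ^ (1 - 1 / q₁) * (1 - (2 ^ finrank ℝ E) ^ (-(1 / q₂)))⁻¹ *
        (eMorreyNorm μ s t K * eMorreyNorm μ p₁ q₁ f * μ (ball x R) ^ (-(1 / q₂))) := by
  set D : ℝ≥0∞ := 2 ^ finrank ℝ E
  set V := μ (ball x R)
  set κ := eMorreyNorm μ s t K
  set F := eMorreyNorm μ p₁ q₁ f
  have hD0 : D ≠ 0 := by simp [D]
  have hD : D ≠ ⊤ := by simp [D]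
  have hV0 : V ≠ 0 := (measure_ball_pos μ x hR).ne'
  have hV : V ≠ ⊤ := measure_ball_lt_top.ne
  have hball (k : ℕ) : μ (ball 0 (2 ^ k * R)) = D ^ k * V := by
    rw [← μ.addHaar_ball_center x, measure_ball_two_pow_mul]
  calc (f ⋆ₗ[μ] (ball 0 R)ᶜ.indicator K) x
      ≤ ∫⁻ y, ∑' k : ℕ, κ * (D ^ k * V) ^ (-(1 / t)) *
          (f y * (ball 0 (2 ^ (k + 1) * R)).indicator 1 (-y + x)) ∂μ := by
        refine lintegral_mono fun y => ?_
        grw [hK.indicator_compl_ball_le_tsum (t := t) hKm hs hR]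
        simp only [← ENNReal.tsum_mul_left, hball]
        exact (tsum_congr fun k => mul_left_comm _ _ _).le
    _ = ∑' k : ℕ, κ * (D ^ k * V) ^ (-(1 / t)) *
          ∫⁻ y in ball x (2 ^ (k + 1) * R), f y ∂μ := by
        have hm (k : ℕ) : AEMeasurable
            (fun y => f y * (ball 0 (2 ^ (k + 1) * R)).indicator 1 (-y + x)) μ :=
          hf.mul ((measurable_one.indicator measurableSet_ball).comp (by fun_prop)).aemeasurable
        rw [lintegral_tsum fun k => (hm k).const_mul _]
        refine tsum_congr fun k => ?_
        rw [lintegral_const_mul'' _ (hm k), ← lconvolution_def, lconvolution_indicator_ball_one]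
    _ ≤ ∑' k : ℕ, κ * (D ^ k * V) ^ (-(1 / t)) * (F * (D ^ (k + 1) * V) ^ (1 - 1 / q₁)) := by
        gcongr with k
        grw [eMorreyNorm.lintegral_ball_le (q := q₁) hp₁ hf x (by positivity),
          measure_ball_two_pow_mul]
    _ = ∑' k : ℕ, κ * F * (D ^ (1 - 1 / q₁) * V ^ (-(1 / q₂)) * (D ^ (-(1 / q₂))) ^ k) := by
        refine tsum_congr fun k => ?_
        rw [← dyadic_rpow_mul_rpow_eq hD0 hD hV0 hV hq₂, mul_mul_mul_comm]
    _ = _ := by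
        simp only [ENNReal.tsum_mul_left, ENNReal.tsum_geometric]
        ring

lemma rpow_lintegral_ball_lconvolution_indicator_compl_ball_le (hf : AEMeasurable f μ)
    (hK : IsRadiallyDecreasing K) (hKm : AEMeasurable K μ) (hp₁ : 1 ≤ p₁) (hs : 1 ≤ s)
    (hp₂_pos : 0 < p₂) (hq₂ : 1 / q₂ = 1 / q₁ - (1 - 1 / t)) (a : E) {R : ℝ} (hR : 0 < R) :
    (∫⁻ x in ball a R, (f ⋆ₗ[μ] (ball 0 R)ᶜ.indicator K) x ^ p₂ ∂μ) ^ (1 / p₂) ≤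
      (2 ^ finrank ℝ E) ^ (1 - 1 / q₁) * (1 - (2 ^ finrank ℝ E) ^ (-(1 / q₂)))⁻¹ *
        eMorreyNorm μ s t K * eMorreyNorm μ p₁ q₁ f * μ (ball a R) ^ (1 / p₂ - 1 / q₂) := by
  have hball (x : E) : μ (ball x R) = μ (ball a R) := by
    rw [μ.addHaar_ball_center, μ.addHaar_ball_center a]
  grw [lintegral_mono fun x => ENNReal.rpow_le_rpow
    (lconvolution_indicator_compl_ball_le hf hK hKm hp₁ hs hq₂ x hR) hp₂_pos.le]
  simp only [hball]
  rw [rpow_setLIntegral_const_rpow hp₂_pos, sub_eq_neg_add (1 / p₂),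
    ENNReal.rpow_add _ _ (measure_ball_pos μ a hR).ne' measure_ball_lt_top.ne]
  exact le_of_eq (by ring)

lemma rpow_lintegral_ball_lconvolution_le (hf : AEMeasurable f μ) (hK : IsRadiallyDecreasing K)
    (hKm : AEMeasurable K μ) (hp₁ : 1 ≤ p₁) (hs : 1 ≤ s) (hp₂_pos : 0 < p₂)
    (hp₂ : 1 / p₂ = 1 / p₁ - (1 - 1 / s)) (hq₂ : 1 / q₂ = 1 / q₁ - (1 - 1 / t))
    (a : E) {R : ℝ} (hR : 0 < R) :
    (∫⁻ x in ball a R, (f ⋆ₗ[μ] K) x ^ p₂ ∂μ) ^ (1 / p₂) ≤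
      morreyYoungConst (2 ^ finrank ℝ E) p₁ q₁ q₂ * eMorreyNorm μ s t K * eMorreyNorm μ p₁ q₁ f *
        μ (ball a R) ^ (1 / p₂ - 1 / q₂) := by
  set N := f ⋆ₗ[μ] (ball 0 R).indicator K
  set M := f ⋆ₗ[μ] (ball 0 R)ᶜ.indicator K
  have hK_near : AEMeasurable ((ball 0 R).indicator K) μ := hKm.indicator measurableSet_ball
  have hK_far : AEMeasurable ((ball 0 R)ᶜ.indicator K) μ :=
    hKm.indicator measurableSet_ball.compl
  have split : f ⋆ₗ[μ] K = N + M := by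
    ext x
    rw [← Set.indicator_self_add_compl (ball 0 R) K, lconvolution_add hf hK_near, Pi.add_apply]
  have hp₂_one : 1 ≤ p₂ := by
    have := (div_le_one (zero_lt_one.trans_le hp₁)).2 hp₁
    have := (div_le_one (zero_lt_one.trans_le hs)).2 hs
    exact (div_le_one hp₂_pos).1 (by linarith)
  calc (∫⁻ x in ball a R, (f ⋆ₗ[μ] K) x ^ p₂ ∂μ) ^ (1 / p₂)
      = (∫⁻ x in ball a R, (N + M) x ^ p₂ ∂μ) ^ (1 / p₂) := by rw [split]
    _ ≤ (∫⁻ x in ball a R, N x ^ p₂ ∂μ) ^ (1 / p₂) +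
          (∫⁻ x in ball a R, M x ^ p₂ ∂μ) ^ (1 / p₂) :=
        ENNReal.lintegral_Lp_add_le (aemeasurable_lconvolution hf hK_near).restrict
          (aemeasurable_lconvolution hf hK_far).restrict hp₂_one
    _ ≤ _ := by
        grw [rpow_lintegral_ball_lconvolution_indicator_ball_le_eMorreyNorm hf hKm hp₁ hs hp₂_pos
            hp₂ hq₂ a hR,
          rpow_lintegral_ball_lconvolution_indicator_compl_ball_le hf hK hKm hp₁ hs hp₂_pos hq₂ a
            hR]
        rw [morreyYoungConst, ← add_mul, ← add_mul, ← add_mul]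

theorem eMorreyNorm_lconvolution_le (hf : AEMeasurable f μ) (hK : IsRadiallyDecreasing K)
    (hKm : AEMeasurable K μ) (hp₁ : 1 ≤ p₁) (hs : 1 ≤ s) (hp₂_pos : 0 < p₂)
    (hp₂ : 1 / p₂ = 1 / p₁ - (1 - 1 / s)) (hq₂ : 1 / q₂ = 1 / q₁ - (1 - 1 / t)) :
    eMorreyNorm μ p₂ q₂ (f ⋆ₗ[μ] K) ≤
      morreyYoungConst (2 ^ finrank ℝ E) p₁ q₁ q₂ * eMorreyNorm μ s t K *
        eMorreyNorm μ p₁ q₁ f := by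
  refine iSup_le fun a => iSup_le fun R => iSup_le fun hR => ?_
  grw [rpow_lintegral_ball_lconvolution_le hf hK hKm hp₁ hs hp₂_pos hp₂ hq₂ a hR]
  rw [mul_left_comm,
    ← ENNReal.rpow_add _ _ (measure_ball_pos μ a hR).ne' measure_ball_lt_top.ne]
  simp

end Convolution

section BesselRiesz

variable {n : ℕ} {α γ : ℝ}

lemma measurable_besselRieszKernel : Measurable (besselRieszKernel n α γ) := by
  unfold besselRieszKernel
  fun_prop

lemma isRadiallyDecreasing_besselRieszKernel (hα : α ≤ n) (hγ : 0 ≤ γ) :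
    IsRadiallyDecreasing fun x => ‖besselRieszKernel n α γ x‖ₑ := by
  intro w z hw hwz
  have hw' : 0 < ‖w‖ := norm_pos_iff.2 hw
  rw [enorm_le_iff_norm_le, Real.norm_of_nonneg (by unfold besselRieszKernel; positivity),
    Real.norm_of_nonneg (by unfold besselRieszKernel; positivity)]
  unfold besselRieszKernel
  gcongr ?_ / (1 + ?_) ^ γ
  exact Real.rpow_le_rpow_of_nonpos hw' hwz (sub_nonpos.2 hα)

lemma morreyNorm_eq_eMorreyNorm {p : ℝ} (hp : 0 ≤ p) (q : ℝ) (f : EuclideanSpace ℝ (Fin n) → ℝ) :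
    morreyNorm n p q f = eMorreyNorm volume p q fun x => ‖f x‖ₑ := by
  simp only [morreyNorm, eMorreyNorm, Real.enorm_eq_ofReal_abs,
    ENNReal.ofReal_rpow_of_nonneg (abs_nonneg _) hp]

lemma enorm_besselRiesz_le (f : EuclideanSpace ℝ (Fin n) → ℝ) (x : EuclideanSpace ℝ (Fin n)) :
    ‖besselRiesz n α γ f x‖ₑ ≤
      ((fun y => ‖f y‖ₑ) ⋆ₗ[volume] fun y => ‖besselRieszKernel n α γ y‖ₑ) x := by
  refine (enorm_integral_le_lintegral_enorm _).trans_eq (lintegral_congr fun y => ?_)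
  rw [enorm_mul, mul_comm, neg_add_eq_sub]

theorem besselRiesz_morrey_bounded_general (n : ℕ) (hn : 1 ≤ n) (p₁ q₁ p₂ q₂ s t : ℝ)
    (hp₁ : 1 ≤ p₁) (hp₁q₁ : p₁ ≤ q₁) (hs : 1 ≤ s) (hst : s ≤ t) (hq₂_pos : 0 < q₂)
    (hp₂ : 1 / p₂ = 1 / p₁ - (1 - 1 / s)) (hq₂ : 1 / q₂ = 1 / q₁ - (1 - 1 / t)) :
    ∃ C : ℝ, 0 < C ∧ ∀ (α γ : ℝ) (f : EuclideanSpace ℝ (Fin n) → ℝ),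
      α ≤ n → 0 ≤ γ → AEMeasurable f →
      morreyNorm n p₂ q₂ (besselRiesz n α γ f) ≤
        ENNReal.ofReal C * morreyNorm n s t (besselRieszKernel n α γ) * morreyNorm n p₁ q₁ f := by
  have : Nonempty (Fin n) := ⟨⟨0, hn⟩⟩
  have hp₂_pos : 0 < p₂ := by
    have := one_div_le_one_div_of_le (zero_lt_one.trans_le hp₁) hp₁q₁
    have := one_div_le_one_div_of_le (zero_lt_one.trans_le hs) hst
    have := one_div_pos.2 hq₂_pos
    exact one_div_pos.1 (by linarith)
  set D : ℝ≥0∞ := 2 ^ finrank ℝ (EuclideanSpace ℝ (Fin n))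
  have hD : 1 < D := one_lt_pow₀ ENNReal.one_lt_two finrank_pos.ne'
  have hD_top : D ≠ ⊤ := by simp [D]
  have hC_top := morreyYoungConst.ne_top (p₁ := p₁) (q₁ := q₁) hD hD_top hq₂_pos
  refine ⟨(morreyYoungConst D p₁ q₁ q₂).toReal,
    ENNReal.toReal_pos (morreyYoungConst.ne_zero hD hD_top) hC_top, fun α γ f hα hγ hf => ?_⟩
  rw [ENNReal.ofReal_toReal hC_top, morreyNorm_eq_eMorreyNorm hp₂_pos.le,
    morreyNorm_eq_eMorreyNorm (zero_le_one.trans hs),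
    morreyNorm_eq_eMorreyNorm (zero_le_one.trans hp₁)]
  grw [eMorreyNorm.mono hp₂_pos.le (enorm_besselRiesz_le f)]
  exact eMorreyNorm_lconvolution_le hf.enorm (isRadiallyDecreasing_besselRieszKernel hα hγ)
    measurable_besselRieszKernel.enorm.aemeasurable hp₁ hs hp₂_pos hp₂ hq₂

lemma sobolev_exponent_pos {q₁ q₂ t : ℝ} (hn : 1 ≤ n) (hq₁_pos : 0 < q₁) (hq₁ : q₁ < n / α)
    (ht : t = n / (n - α)) (hq₂ : 1 / q₂ = 1 / q₁ - (1 - 1 / t)) : 0 < q₂ := by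
  have hn0 : (0 : ℝ) < n := by exact_mod_cast hn
  have ht' : 1 - 1 / t = α / n := by
    rw [ht, one_div_div, sub_div, div_self hn0.ne', sub_sub_cancel]
  have : α / n < 1 / q₁ := by simpa using one_div_lt_one_div_of_lt hq₁_pos hq₁
  exact one_div_pos.1 (by linarith)

end BesselRiesz

/-- boundedness of `I_{α,γ}` (for `γ ≥ 0`) from `L^{p₁,q₁}` to `L^{p₂,q₂}`
with `‖I_{α,γ} f‖_{L^{p₂,q₂}} ≤ C ‖K_{α,γ}‖_{L^{s,t}} ‖f‖_{L^{p₁,q₁}}`, where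
`1 ≤ p₁ ≤ q₁ < n/α`, `1 ≤ s < t = n/(n-α)`, `1/p₂ = 1/p₁ - 1/s'`, `1/q₂ = 1/q₁ - 1/t'`
(with `1/s' = 1 - 1/s` and `1/t' = 1 - 1/t`). -/
theorem besselRiesz_morrey_bounded (n : ℕ) (hn : 1 ≤ n) (α γ p₁ q₁ p₂ q₂ s t : ℝ)
    (hα0 : 0 < α) (hαn : α < n) (hγ : 0 ≤ γ)
    (hp₁ : 1 ≤ p₁) (hp₁q₁ : p₁ ≤ q₁) (hq₁ : q₁ < n / α)
    (hs : 1 ≤ s) (hst : s < t) (ht : t = n / (n - α))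
    (hp₂ : 1 / p₂ = 1 / p₁ - (1 - 1 / s))
    (hq₂ : 1 / q₂ = 1 / q₁ - (1 - 1 / t)) :
    ∃ C : ℝ, 0 < C ∧ ∀ f : EuclideanSpace ℝ (Fin n) → ℝ,
      Measurable f → morreyNorm n p₁ q₁ f ≠ ⊤ →
      morreyNorm n p₂ q₂ (besselRiesz n α γ f) ≤
        ENNReal.ofReal C * morreyNorm n s t (besselRieszKernel n α γ) *
          morreyNorm n p₁ q₁ f := by
  obtain ⟨C, hC, h⟩ := besselRiesz_morrey_bounded_general n hn p₁ q₁ p₂ q₂ s t hp₁ hp₁q₁ hs hst.le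
    (sobolev_exponent_pos hn (by linarith) hq₁ ht hq₂) hp₂ hq₂
  exact ⟨C, hC, fun f hf _ => h α γ f hαn.le hγ hf.aemeasurable⟩
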